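/- Let p be a prime, n = d + m with d, m ≥ 1, and α ∈ ℤ_p^m with τ(α) = m+1. Let τ = (τ₁,…,τₙ) ∈ ℝ^n_{>0} satisfy Σ_{i=1}^m τ_{d+i} < m+1, Σ_{i=1}^n τ_i > n+1, and τ_i > 1 for all i. Then the Hausdorff dimension of 𝔚_n(τ) ∩ Π_α is at most min_{1≤i≤d} ( n + 1 − Σ_{i=1}^m τ_{d+i} + Σ_{1≤j≤d, τ_j ≤ τ_i} (τ_i − τ_j) ) / τ_i. -/

import Mathlib

/-!
The dimension bound is a first-moment (Hausdorff–Cantelli) argument.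

Fix `i ≤ d` and write `σ = ∑ τ_{d+l}`. If `x ∈ Π_α` lies in `𝔄_{q₀}(τ)` with
`p^k ≤ q₀ < p^(k+1)`, then `p ∤ q₀` (otherwise `q_l / q₀` is not a `p`-adic integer), so the
condition on the last `m` coordinates says that `q₀` is an admissible denominator for `α`:
`‖q₀ α_l - q_l‖ < q₀^(-τ_{d+l})` for some integers `|q_l| ≤ q₀`.

The exponent hypothesis `τ(α) = m + 1` makes admissible denominators scarce
(`eventually_card_admissibleDenoms_le`). For `u < σ / (m+1)` we have `∑ τ_{d+l} / u > m + 1`, so for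
large `k` no integer vector `(a, b)` with `0 < a` and entries of size at most `R ≈ p^(ku)` satisfies
`‖a α_l - b_l‖ < p^(-k τ_{d+l})` for all `l`. The difference of the vectors `(q₀, q)` of two
admissible denominators satisfies these inequalities by ultrametricity; hence every box of side `R` contains the vector of at
most one admissible denominator, and there are `O((p^k)^((1-u)(m+1)))` of them. The exponent is as
close as desired to `m + 1 - σ`.

For each admissible `q₀` and each choice of `q_1, …, q_d`, the resulting `d`-dimensional rectangle
is covered by `O(∏_{τ_j ≤ τ_i} (p^k)^(τ_i - τ_j))` residue balls of radius about `p^(-k τ_i)`.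
Summing the `t`-th powers of the diameters gives a convergent geometric series as soon as
`t τ_i > n + 1 - σ + ∑_{τ_j ≤ τ_i} (τ_i - τ_j)`.
-/

open scoped BigOperators ENNReal Classical
open MeasureTheory

noncomputable instance {p : ℕ} [Fact p.Prime] : MeasurableSpace ℤ_[p] := borel _
instance {p : ℕ} [Fact p.Prime] : BorelSpace ℤ_[p] := ⟨rfl⟩

/-- The Diophantine exponent of `α ∈ ℤ_p^m`. -/
noncomputable def dioExp {p : ℕ} [Fact p.Prime] {m : ℕ} (α : Fin m → ℤ_[p]) : ℝ :=
  sSup {s : ℝ | ∃ τ : Fin m → ℝ, s = ∑ i, τ i ∧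
    ∀ Q₀ : ℕ, ∃ Q : ℕ, Q₀ ≤ Q ∧ ∃ q₀ : ℤ, ∃ q : Fin m → ℤ,
      0 < q₀ ∧ q₀ ≤ (Q : ℤ) ∧ (∀ i, |q i| ≤ (Q : ℤ)) ∧
      ∀ i, ‖(q₀ : ℤ_[p]) * α i - (q i : ℤ_[p])‖ < (Q : ℝ) ^ (-(τ i))}

/-- The set `𝔄_{q₀}(τ)` of weighted `τ`-approximable points with denominator `q₀`. -/
def Aset {p : ℕ} [Fact p.Prime] {n : ℕ} (τ : Fin n → ℝ) (q₀ : ℕ) :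
    Set (Fin n → ℤ_[p]) :=
  ⋃ (q : Fin n → ℤ) (_ : ∀ i, |q i| ≤ (q₀ : ℤ) ∧ Int.gcd (q i) q₀ = 1),
    {x | ∀ i, ‖(x i : ℚ_[p]) - (q i : ℚ_[p]) / (q₀ : ℚ_[p])‖ < (q₀ : ℝ) ^ (-(τ i))}

/-- The set `𝔚_n(τ) = limsup_{q₀ → ∞} 𝔄_{q₀}(τ)` of weighted `τ`-approximable points. -/
def Wset {p : ℕ} [Fact p.Prime] {n : ℕ} (τ : Fin n → ℝ) : Set (Fin n → ℤ_[p]) :=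
  ⋂ (Q : ℕ), ⋃ (q₀ : ℕ) (_ : Q ≤ q₀), Aset τ q₀

/-- The coordinate hyperplane `Π_α ⊆ ℤ_p^{d+m}` determined by `α ∈ ℤ_p^m`. -/
def Pialpha {p : ℕ} [Fact p.Prime] {d m : ℕ} (α : Fin m → ℤ_[p]) :
    Set (Fin (d + m) → ℤ_[p]) :=
  {x | ∀ i : Fin m, x (Fin.natAdd d i) = α i}

/-! ### Hausdorff–Cantelli -/

/-- Hausdorff–Cantelli lemma: a set contained in the limsup of finite families of sets, with
diameters bounded by `D k → 0` whose `t`-th powers sum to a finite total, has Hausdorff dimension at most `t`. -/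
theorem dimH_le_of_limsup_cover {X : Type*} [EMetricSpace X] {ι : ℕ → Type*}
    [∀ k, Fintype (ι k)] (U : ∀ k, ι k → Set X) (D : ℕ → ℝ≥0∞) (E : Set X) {t : ℝ} (ht : 0 ≤ t)
    (hD : Filter.Tendsto D Filter.atTop (nhds 0)) (hdiam : ∀ k i, Metric.ediam (U k i) ≤ D k)
    (hsum : ∑' k, (Fintype.card (ι k) : ℝ≥0∞) * D k ^ t ≠ ⊤)
    (hE : ∀ K : ℕ, E ⊆ ⋃ (k : ℕ) (_ : K ≤ k) (i : ι k), U k i) :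
    dimH E ≤ ENNReal.ofReal t := by
  borelize X
  have hsup : Filter.Tendsto (fun K => ⨆ k, D (k + K)) Filter.atTop (nhds 0) := by
    rw [ENNReal.tendsto_nhds_zero] at hD ⊢
    intro ε hε
    obtain ⟨K, hK⟩ := Filter.eventually_atTop.1 (hD ε hε)
    filter_upwards [Filter.eventually_ge_atTop K] with L hL
    exact iSup_le fun k => hK _ (by omega)
  have key := Measure.hausdorffMeasure_le_liminf_tsum (ι := fun K => Σ k, ι (k + K)) t E
    (fun K => ⨆ k, D (k + K)) hsup (fun K i => U (i.1 + K) i.2)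
    (Filter.Eventually.of_forall fun K i =>
      (hdiam _ _).trans (le_iSup (fun k => D (k + K)) i.1))
    (Filter.Eventually.of_forall fun K x hx => by
      have := hE K hx
      simp only [Set.mem_iUnion] at this ⊢
      obtain ⟨k, hk, i, hi⟩ := this
      obtain ⟨l, rfl⟩ := Nat.exists_eq_add_of_le' hk
      exact ⟨⟨l, i⟩, hi⟩)
  have hzero : Filter.Tendsto (fun K => ∑' i : Σ k, ι (k + K), Metric.ediam (U (i.1 + K) i.2) ^ t)
      Filter.atTop (nhds 0) := by
    refine tendsto_of_tendsto_of_tendsto_of_le_of_le tendsto_const_nhds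
      (ENNReal.tendsto_sum_nat_add _ hsum) (fun _ => zero_le) fun K => ?_
    dsimp only
    rw [ENNReal.tsum_sigma' (fun i : Σ k, ι (k + K) => Metric.ediam (U (i.1 + K) i.2) ^ t)]
    refine ENNReal.tsum_le_tsum fun k => ?_
    rw [tsum_fintype]
    refine (Finset.sum_le_card_nsmul _ _ (D (k + K) ^ t) fun i _ => ?_).trans ?_
    · exact ENNReal.rpow_le_rpow (hdiam _ _) ht
    · simp
  rw [hzero.liminf_eq] at key
  have : Measure.hausdorffMeasure ((t.toNNReal : NNReal) : ℝ) E ≠ ⊤ := by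
    rw [Real.coe_toNNReal t ht]
    exact ne_top_of_le_ne_top ENNReal.zero_ne_top key
  exact dimH_le_of_hausdorffMeasure_ne_top this

/-- Hausdorff–Cantelli for covers by `O((b^k)^N)` sets of diameter `O((b^k)^(-w))`. -/
theorem dimH_le_of_geometric_cover {X : Type*} [EMetricSpace X] {ι : ℕ → Type*}
    [∀ k, Fintype (ι k)] (U : ∀ k, ι k → Set X) (E : Set X) {t b C C' N w : ℝ} (ht : 0 ≤ t)
    (hb : 1 < b) (hC' : 0 ≤ C') (hw : 0 < w) (hN : N < w * t)
    (hcard : ∀ᶠ k : ℕ in Filter.atTop, (Fintype.card (ι k) : ℝ) ≤ C * (b ^ k) ^ N)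
    (hdiam : ∀ k i, Metric.ediam (U k i) ≤ ENNReal.ofReal (C' * (b ^ k) ^ (-w)))
    (hE : ∀ K : ℕ, E ⊆ ⋃ (k : ℕ) (_ : K ≤ k) (i : ι k), U k i) :
    dimH E ≤ ENNReal.ofReal t := by
  have hb0 : 0 < b := by linarith
  have hpow : ∀ (k : ℕ) (y : ℝ), ((b : ℝ) ^ k) ^ y = (b ^ y) ^ k := by
    intro k y
    rw [← Real.rpow_natCast b k, ← Real.rpow_mul hb0.le, mul_comm, Real.rpow_mul hb0.le,
      Real.rpow_natCast]
  have hlt : ∀ y : ℝ, y < 0 → b ^ y < 1 := fun y hy => Real.rpow_lt_one_of_one_lt_of_neg hb hy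
  refine dimH_le_of_limsup_cover U _ E ht ?_ hdiam ?_ hE
  · rw [← ENNReal.ofReal_zero]
    refine ENNReal.tendsto_ofReal ?_
    simp_rw [hpow]
    have := (tendsto_pow_atTop_nhds_zero_of_lt_one (r := b ^ (-w)) (by positivity)
      (hlt _ (by linarith))).const_mul C'
    simpa using this
  · have heq : ∀ k : ℕ, (Fintype.card (ι k) : ℝ≥0∞) *
        ENNReal.ofReal (C' * (b ^ k) ^ (-w)) ^ t =
        ENNReal.ofReal ((Fintype.card (ι k) : ℝ) * (C' * (b ^ k) ^ (-w)) ^ t) := by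
      intro k
      rw [ENNReal.ofReal_mul (Nat.cast_nonneg _), ENNReal.ofReal_natCast,
        ENNReal.ofReal_rpow_of_nonneg (by positivity) ht]
    simp_rw [heq]
    refine Summable.tsum_ofReal_ne_top ?_
    have hgeo : Summable fun k : ℕ => C * C' ^ t * (b ^ (N - w * t)) ^ k :=
      (summable_geometric_of_lt_one (by positivity) (hlt _ (by linarith))).mul_left _
    refine hgeo.of_norm_bounded_eventually_nat ?_
    filter_upwards [hcard] with k hk
    rw [Real.norm_of_nonneg (by positivity), Real.mul_rpow hC' (by positivity),
      ← hpow, ← Real.rpow_mul (by positivity)]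
    calc _ ≤ C * (b ^ k) ^ N * (C' ^ t * (b ^ k) ^ (-w * t)) := by gcongr
      _ = C * C' ^ t * ((b ^ k) ^ N * (b ^ k) ^ (-w * t)) := by ring
      _ = _ := by rw [← Real.rpow_add (by positivity)]; ring_nf

/-! ### Counting admissible denominators -/

/-- If the weights `v` have sum exceeding the (finite, nonzero) exponent of `α`, then the
corresponding system has no solutions at all large heights. -/
theorem exists_forall_not_approx {p : ℕ} [Fact p.Prime] {m : ℕ} (α : Fin m → ℤ_[p])
    (hα : dioExp α = (m : ℝ) + 1) (v : Fin m → ℝ) (hv : (m : ℝ) + 1 < ∑ j, v j) :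
    ∃ R₀ : ℕ, ∀ R : ℕ, R₀ ≤ R → ∀ (a : ℤ) (b : Fin m → ℤ), 0 < a → a ≤ (R : ℤ) →
      (∀ j, |b j| ≤ (R : ℤ)) →
      ¬ ∀ j, ‖(a : ℤ_[p]) * α j - (b j : ℤ_[p])‖ < (R : ℝ) ^ (-(v j)) := by
  by_contra! hcon
  unfold dioExp at hα
  have hbdd : ∀ T : Set ℝ, sSup T = (m : ℝ) + 1 → BddAbove T := by
    intro T hT
    by_contra h
    -- an unbounded set would have the junk supremum `0`
    rw [Real.sSup_of_not_bddAbove h] at hT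
    exact (by positivity : (m : ℝ) + 1 ≠ 0) hT.symm
  have := le_csSup (hbdd _ hα) ⟨v, rfl, fun Q₀ => by
    obtain ⟨R, hR, a, b, h1, h2, h3, h4⟩ := hcon Q₀
    exact ⟨R, hR, a, b, h1, h2, h3, h4⟩⟩
  rw [hα] at this
  linarith

/-- The denominators `q₀ ∈ [p^k, p^(k+1))` prime to `p` for which `α` has an approximation
`q / q₀` with weights `v`. Being a unit, `q₀` has been multiplied out of the inequalities. -/
noncomputable def admissibleDenoms {p : ℕ} [Fact p.Prime] {m : ℕ} (α : Fin m → ℤ_[p])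
    (v : Fin m → ℝ) (k : ℕ) : Finset ℕ :=
  (Finset.range (p ^ (k + 1))).filter fun q₀ => p ^ k ≤ q₀ ∧ ¬ p ∣ q₀ ∧
    ∃ q : Fin m → ℤ, ∀ j, |q j| ≤ (q₀ : ℤ) ∧
      ‖(q₀ : ℤ_[p]) * α j - (q j : ℤ_[p])‖ < (q₀ : ℝ) ^ (-(v j))

/-- Two integers with the same quotient by `R` differ by at most `R`. -/
theorem abs_sub_le_of_ediv_eq {a b R : ℤ} (hR : 0 < R) (h : a / R = b / R) : |a - b| ≤ R := by
  have h1 := Int.emod_add_mul_ediv a R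
  have h2 := Int.emod_add_mul_ediv b R
  have h3 := Int.emod_nonneg a hR.ne'
  have h4 := Int.emod_nonneg b hR.ne'
  have h5 := Int.emod_lt_of_pos a hR
  have h6 := Int.emod_lt_of_pos b hR
  rw [h] at h1
  rw [abs_le]
  constructor <;> linarith

/-- Boxes of side `R ≤ (p^k)^u` meet at most one admissible vector, provided the system with
weights `v / u` has no solution of height `R`. -/
theorem card_admissibleDenoms_le_boxes {p : ℕ} [Fact p.Prime] {m : ℕ} (α : Fin m → ℤ_[p])
    (v : Fin m → ℝ) (hv : ∀ j, 0 < v j) {u : ℝ} (hu : 0 < u) (k R : ℕ) (hR : 0 < R)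
    (hRu : (R : ℝ) ≤ ((p : ℝ) ^ k) ^ u)
    (hno : ∀ (a : ℤ) (b : Fin m → ℤ), 0 < a → a ≤ (R : ℤ) → (∀ j, |b j| ≤ (R : ℤ)) →
      ¬ ∀ j, ‖(a : ℤ_[p]) * α j - (b j : ℤ_[p])‖ < (R : ℝ) ^ (-(v j / u))) :
    (admissibleDenoms α v k).card ≤ (2 * (p ^ (k + 1) / R + 1) + 1) ^ (m + 1) := by
  have hp : 0 < p := (Fact.out : p.Prime).pos
  have hRZ : (0 : ℤ) < R := by exact_mod_cast hR
  have hex : ∀ q₀ : ℕ, ∃ q : Fin m → ℤ, q₀ ∈ admissibleDenoms α v k → ∀ j, |q j| ≤ (q₀ : ℤ) ∧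
      ‖(q₀ : ℤ_[p]) * α j - (q j : ℤ_[p])‖ < (q₀ : ℝ) ^ (-(v j)) := by
    intro q₀
    by_cases h : q₀ ∈ admissibleDenoms α v k
    · obtain ⟨q, hq⟩ := (Finset.mem_filter.1 h).2.2.2
      exact ⟨q, fun _ => hq⟩
    · exact ⟨0, fun h' => absurd h' h⟩
  choose q hq using hex
  set B : ℕ := p ^ (k + 1) / R + 1 with hB
  have hdiv : ∀ z : ℤ, |z| ≤ (p ^ (k + 1) : ℕ) → z / (R : ℤ) ∈ Finset.Icc (-(B : ℤ)) B := by
    intro z hz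
    rw [abs_le] at hz
    have h1 : ((p ^ (k + 1) : ℕ) : ℤ) < B * R := by
      have := Nat.lt_div_mul_add (a := p ^ (k + 1)) hR
      rw [← Nat.cast_mul, hB, add_mul, one_mul]
      exact_mod_cast this
    rw [Finset.mem_Icc]
    constructor
    · rw [Int.le_ediv_iff_mul_le hRZ]; linarith
    · exact (Int.ediv_lt_of_lt_mul hRZ (by linarith)).le
  have hnorm : ∀ q₀ ∈ admissibleDenoms α v k, ∀ j,
      ‖(q₀ : ℤ_[p]) * α j - (q q₀ j : ℤ_[p])‖ < (R : ℝ) ^ (-(v j / u)) := by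
    intro q₀ h j
    refine (hq q₀ h j).2.trans_le ?_
    have hk : ((p : ℝ) ^ k) ≤ q₀ := by exact_mod_cast (Finset.mem_filter.1 h).2.1
    have hX : (0 : ℝ) < (p : ℝ) ^ k := by positivity
    calc (q₀ : ℝ) ^ (-(v j)) ≤ ((p : ℝ) ^ k) ^ (-(v j)) :=
          Real.rpow_le_rpow_of_nonpos hX hk (by linarith [hv j])
      _ = (((p : ℝ) ^ k) ^ u) ^ (-(v j / u)) := by
          rw [← Real.rpow_mul hX.le]; congr 1; field_simp
      _ ≤ (R : ℝ) ^ (-(v j / u)) :=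
          Real.rpow_le_rpow_of_nonpos (by exact_mod_cast hR) hRu
            (by have := div_pos (hv j) hu; linarith)
  have hinj : ∀ a ∈ admissibleDenoms α v k, ∀ b ∈ admissibleDenoms α v k,
      (a : ℤ) / R = (b : ℤ) / R → (∀ j, q a j / (R : ℤ) = q b j / (R : ℤ)) → b ≤ a := by
    intro a ha b hb h0 h1
    by_contra! hlt
    refine hno ((b : ℤ) - a) (fun j => q b j - q a j) (by omega)
      ((le_abs_self _).trans (abs_sub_le_of_ediv_eq hRZ h0.symm))
      (fun j => abs_sub_le_of_ediv_eq hRZ (h1 j).symm) fun j => ?_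
    have : (((b : ℤ) - a : ℤ) : ℤ_[p]) * α j - ((q b j - q a j : ℤ) : ℤ_[p]) =
        ((b : ℤ_[p]) * α j - (q b j : ℤ_[p])) + -((a : ℤ_[p]) * α j - (q a j : ℤ_[p])) := by
      push_cast; ring
    rw [this]
    refine (PadicInt.nonarchimedean _ _).trans_lt (max_lt (hnorm b hb j) ?_)
    rw [norm_neg]
    exact hnorm a ha j
  have hcard := Finset.card_le_card_of_injOn (s := admissibleDenoms α v k)
    (t := Finset.Icc (-(B : ℤ)) B ×ˢ Fintype.piFinset fun _ : Fin m => Finset.Icc (-(B : ℤ)) B)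
    (fun q₀ => ((q₀ : ℤ) / R, fun j => q q₀ j / R))
    (by
      intro q₀ h
      have hlt : (q₀ : ℤ) ≤ (p ^ (k + 1) : ℕ) := by
        exact_mod_cast (Finset.mem_range.1 (Finset.mem_filter.1 h).1).le
      simp only [Finset.coe_product, Set.mem_prod, Finset.mem_coe, Fintype.mem_piFinset]
      exact ⟨hdiv _ (by rwa [Nat.abs_cast]), fun j => hdiv _ ((hq q₀ h j).1.trans hlt)⟩)
    (by
      intro a ha b hb hab
      simp only [Prod.mk.injEq, funext_iff] at hab
      exact le_antisymm (hinj b hb a ha hab.1.symm fun j => (hab.2 j).symm)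
        (hinj a ha b hb hab.1 hab.2))
  refine hcard.trans (le_of_eq ?_)
  rw [Finset.card_product, Fintype.card_piFinset_const, Int.card_Icc, pow_succ']
  have : ((B : ℤ) + 1 - -(B : ℤ)).toNat = 2 * B + 1 := by omega
  rw [this]

theorem eventually_card_admissibleDenoms_le {p : ℕ} [Fact p.Prime] {m : ℕ} (α : Fin m → ℤ_[p])
    (hα : dioExp α = (m : ℝ) + 1) (v : Fin m → ℝ) (hv : ∀ j, 0 < v j) {u : ℝ} (hu : 0 < u)
    (hu1 : u ≤ 1) (hsum : u * ((m : ℝ) + 1) < ∑ j, v j) :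
    ∀ᶠ k : ℕ in Filter.atTop, ((admissibleDenoms α v k).card : ℝ) ≤
      (4 * p + 3) ^ (m + 1) * ((p : ℝ) ^ k) ^ ((1 - u) * ((m : ℝ) + 1)) := by
  have hp1 : (1 : ℝ) < p := by exact_mod_cast (Fact.out : p.Prime).one_lt
  obtain ⟨R₀, hR₀⟩ := exists_forall_not_approx α hα (fun j => v j / u) (by
    rw [← Finset.sum_div, lt_div_iff₀ hu, mul_comm]; exact hsum)
  have htend : Filter.Tendsto (fun k : ℕ => ⌊((p : ℝ) ^ k) ^ u⌋₊) Filter.atTop Filter.atTop :=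
    tendsto_nat_floor_atTop.comp
      ((tendsto_rpow_atTop hu).comp (tendsto_pow_atTop_atTop_of_one_lt hp1))
  filter_upwards [htend.eventually_ge_atTop (max R₀ 1)] with k hk
  set R : ℕ := ⌊((p : ℝ) ^ k) ^ u⌋₊ with hRdef
  set X : ℝ := (p : ℝ) ^ k with hX
  have hX1 : 1 ≤ X := one_le_pow₀ hp1.le
  have hX0 : 0 < X := by linarith
  have hR1 : 1 ≤ R := (le_max_right _ _).trans hk
  have hR1' : (1 : ℝ) ≤ R := by exact_mod_cast hR1
  have hRle : (R : ℝ) ≤ X ^ u := Nat.floor_le (by positivity)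
  have hRge : X ^ u ≤ 2 * R := by
    have := Nat.lt_floor_add_one (X ^ u)
    rw [← hRdef] at this
    linarith
  have h := card_admissibleDenoms_le_boxes α v hv hu k R hR1 hRle
    (hR₀ R ((le_max_left _ _).trans hk))
  have hY1 : 1 ≤ X ^ (1 - u) := Real.one_le_rpow hX1 (by linarith)
  have hdiv : ((p ^ (k + 1) / R : ℕ) : ℝ) ≤ 2 * p * X ^ (1 - u) := by
    refine Nat.cast_div_le.trans ?_
    rw [div_le_iff₀ (by linarith)]
    have hmul : X ^ (1 - u) * X ^ u = X := by
      rw [← Real.rpow_add hX0]; simp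
    calc ((p ^ (k + 1) : ℕ) : ℝ) = p * X := by rw [hX]; push_cast; ring
      _ = p * (X ^ (1 - u) * X ^ u) := by rw [hmul]
      _ ≤ p * (X ^ (1 - u) * (2 * R)) := by gcongr
      _ = _ := by ring
  calc ((admissibleDenoms α v k).card : ℝ)
      ≤ (2 * (((p ^ (k + 1) / R : ℕ) : ℝ) + 1) + 1) ^ (m + 1) := by exact_mod_cast h
    _ ≤ ((4 * p + 3) * X ^ (1 - u)) ^ (m + 1) := by
        gcongr
        linarith
    _ = _ := by
        rw [mul_pow, Real.rpow_mul hX0.le, ← Real.rpow_natCast (X ^ (1 - u)) (m + 1)]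
        push_cast
        rfl

/-! ### The cover -/

/-- If `p ∤ q₀`, an approximation of a `p`-adic integer by `q / q₀` can be multiplied out; if
`p ∣ q₀` and `q` is prime to `q₀`, there is no approximation of quality less than `1`. -/
theorem norm_mul_sub_lt_of_approx {p : ℕ} [Fact p.Prime] {x : ℤ_[p]} {q : ℤ} {q₀ : ℕ}
    (h₀ : q₀ ≠ 0) (hg : Int.gcd q q₀ = 1) {ε : ℝ} (hε : ε ≤ 1)
    (h : ‖(x : ℚ_[p]) - (q : ℚ_[p]) / (q₀ : ℚ_[p])‖ < ε) :
    ¬ p ∣ q₀ ∧ ‖(q₀ : ℤ_[p]) * x - (q : ℤ_[p])‖ < ε := by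
  have hq₀ : (q₀ : ℚ_[p]) ≠ 0 := by exact_mod_cast h₀
  have hfac : (q₀ : ℚ_[p]) * x - q = q₀ * ((x : ℚ_[p]) - (q : ℚ_[p]) / (q₀ : ℚ_[p])) := by
    field_simp
  have hnorm : ‖(q₀ : ℤ_[p]) * x - (q : ℤ_[p])‖ =
      ‖(q₀ : ℤ_[p])‖ * ‖(x : ℚ_[p]) - (q : ℚ_[p]) / (q₀ : ℚ_[p])‖ := by
    rw [PadicInt.norm_def, PadicInt.norm_def, ← norm_mul]
    push_cast
    rw [hfac]
  have hlt : ‖(q₀ : ℤ_[p]) * x - (q : ℤ_[p])‖ < ε := by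
    rw [hnorm]
    exact (mul_le_of_le_one_left (norm_nonneg _) (PadicInt.norm_le_one _)).trans_lt h
  refine ⟨fun hdvd => ?_, hlt⟩
  have hq₀lt : ‖(q₀ : ℤ_[p])‖ < 1 := PadicInt.norm_natCast_lt_one_iff.2 hdvd
  have hqlt : ‖(q : ℤ_[p])‖ < 1 := by
    have : (q : ℤ_[p]) = (q₀ : ℤ_[p]) * x + -((q₀ : ℤ_[p]) * x - (q : ℤ_[p])) := by ring
    rw [this]
    refine (PadicInt.nonarchimedean _ _).trans_lt (max_lt ?_ ?_)
    · rw [norm_mul]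
      exact (mul_le_of_le_one_right (norm_nonneg _) (PadicInt.norm_le_one _)).trans_lt hq₀lt
    · rw [norm_neg]; exact hlt.trans_le hε
  have h1 : (p : ℤ) ∣ (Int.gcd q q₀ : ℤ) :=
    Int.dvd_coe_gcd ((PadicInt.norm_int_lt_one_iff_dvd q).1 hqlt) (by exact_mod_cast hdvd)
  rw [hg] at h1
  exact (Fact.out : p.Prime).one_lt.ne' (Nat.dvd_one.1 (by exact_mod_cast h1))

/-- A ball of radius `p^(-a)` is covered by `p^(r-a)` balls of radius `p^(-r)`, with explicit
centres; when `r ≤ a` a single ball suffices. -/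
theorem exists_residue {p : ℕ} [Fact p.Prime] (y : ℤ_[p]) (a r : ℕ)
    (hy : ‖y‖ ≤ (p : ℝ) ^ (-(a : ℤ))) :
    ∃ z : Fin (p ^ (r - a)), ‖y - (p : ℤ_[p]) ^ a * ((z : ℕ) : ℤ_[p])‖ ≤ (p : ℝ) ^ (-(r : ℤ)) := by
  rw [PadicInt.norm_le_pow_iff_mem_span_pow, Ideal.mem_span_singleton] at hy
  obtain ⟨w, rfl⟩ := hy
  refine ⟨⟨w.appr (r - a), PadicInt.appr_lt _ _⟩, ?_⟩
  rw [PadicInt.norm_le_pow_iff_mem_span_pow, Ideal.mem_span_singleton, ← mul_sub]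
  have := PadicInt.appr_spec (r - a) w
  rw [Ideal.mem_span_singleton] at this
  refine (pow_dvd_pow _ (by omega : r ≤ a + (r - a))).trans ?_
  rw [pow_add]
  exact mul_dvd_mul_left _ this

theorem pow_floor_sub_floor_le {b : ℝ} (hb : 1 < b) (k : ℕ) (x y : ℝ) (hx : 0 ≤ x) :
    b ^ (⌊k * x⌋₊ - ⌊k * y⌋₊) ≤ b * (b ^ k) ^ (max (x - y) 0) := by
  have hb0 : 0 < b := by linarith
  rw [← Real.rpow_natCast b k, ← Real.rpow_mul hb0.le, ← Real.rpow_one_add' hb0.le (by positivity),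
    ← Real.rpow_natCast]
  refine Real.rpow_le_rpow_of_exponent_le hb.le ?_
  rcases le_total ⌊k * x⌋₊ ⌊k * y⌋₊ with h | h
  · rw [Nat.sub_eq_zero_of_le h]
    push_cast
    positivity
  · rw [Nat.cast_sub h]
    have h1 := Nat.floor_le (a := (k : ℝ) * x) (by positivity)
    have h2 := Nat.lt_floor_add_one ((k : ℝ) * y)
    have h3 : (k : ℝ) * (x - y) ≤ k * max (x - y) 0 := by gcongr; exact le_max_left _ _
    linarith

/-- The labels of the covering balls at level `k`: an admissible denominator, numerators
`q_1, …, q_d`, and the residues subdividing each side to the side length of the `i`-th one. -/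
abbrev CoverIndex {p : ℕ} [Fact p.Prime] {d m : ℕ} (α : Fin m → ℤ_[p]) (τ : Fin (d + m) → ℝ)
    (i : Fin d) (k : ℕ) : Type :=
  ↥(admissibleDenoms α (fun l => τ (Fin.natAdd d l)) k) ×
    ((j : Fin d) → ↥(Finset.Icc (-((p ^ (k + 1) : ℕ) : ℤ)) (p ^ (k + 1) : ℕ)) ×
      Fin (p ^ (⌊k * τ (Fin.castAdd m i)⌋₊ - ⌊k * τ (Fin.castAdd m j)⌋₊)))

/-- The ball in `Π_α` with a given label. -/
def coverSet {p : ℕ} [Fact p.Prime] {d m : ℕ} (α : Fin m → ℤ_[p]) (τ : Fin (d + m) → ℝ)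
    (i : Fin d) (k : ℕ) (c : CoverIndex α τ i k) : Set (Fin (d + m) → ℤ_[p]) :=
  {x | (∀ l, x (Fin.natAdd d l) = α l) ∧ ∀ j,
    ‖((c.1 : ℕ) : ℤ_[p]) * x (Fin.castAdd m j) - (((c.2 j).1 : ℤ) : ℤ_[p]) -
      (p : ℤ_[p]) ^ ⌊k * τ (Fin.castAdd m j)⌋₊ * (((c.2 j).2 : ℕ) : ℤ_[p])‖ ≤
        (p : ℝ) ^ (-(⌊k * τ (Fin.castAdd m i)⌋₊ : ℤ))}

theorem ediam_coverSet_le {p : ℕ} [Fact p.Prime] {d m : ℕ} (α : Fin m → ℤ_[p])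
    (τ : Fin (d + m) → ℝ) (i : Fin d) (k : ℕ) (c : CoverIndex α τ i k) :
    Metric.ediam (coverSet α τ i k c) ≤
      ENNReal.ofReal (p * ((p : ℝ) ^ k) ^ (-τ (Fin.castAdd m i))) := by
  have hp1 : (1 : ℝ) < p := by exact_mod_cast (Fact.out : p.Prime).one_lt
  have hp0 : (0 : ℝ) < p := by linarith
  set r := ⌊k * τ (Fin.castAdd m i)⌋₊ with hr
  have hrad : (p : ℝ) ^ (-(r : ℤ)) ≤ p * ((p : ℝ) ^ k) ^ (-τ (Fin.castAdd m i)) := by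
    rw [← Real.rpow_natCast (p : ℝ) k, ← Real.rpow_mul hp0.le, ← Real.rpow_intCast]
    nth_rewrite 2 [← Real.rpow_one (p : ℝ)]
    rw [← Real.rpow_add hp0]
    refine Real.rpow_le_rpow_of_exponent_le hp1.le ?_
    have := Nat.lt_floor_add_one ((k : ℝ) * τ (Fin.castAdd m i))
    push_cast
    linarith
  have hunit : ‖((c.1 : ℕ) : ℤ_[p])‖ = 1 := by
    have h := (Finset.mem_filter.1 c.1.2).2.2.1
    exact PadicInt.norm_natCast_eq_one_iff.2 ((Fact.out : p.Prime).coprime_iff_not_dvd.2 h)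
  refine Metric.ediam_le fun x hx y hy => edist_pi_le_iff.2 fun l => ?_
  refine Fin.addCases (fun j => ?_) (fun l => ?_) l
  · rw [edist_dist]
    refine ENNReal.ofReal_le_ofReal (le_trans ?_ hrad)
    rw [dist_eq_norm, ← one_mul ‖_‖, ← hunit, ← norm_mul]
    have hx' := hx.2 j
    have hy' := hy.2 j
    rw [← norm_neg] at hy'
    refine le_trans (le_of_eq ?_) ((PadicInt.nonarchimedean _ _).trans (max_le hx' hy'))
    congr 1
    ring
  · rw [hx.1 l, hy.1 l, edist_self]
    exact zero_le

theorem card_coverIndex_le {p : ℕ} [Fact p.Prime] {d m : ℕ} (α : Fin m → ℤ_[p])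
    (τ : Fin (d + m) → ℝ) (hτ : ∀ l, 0 < τ l) (i : Fin d) (k : ℕ) :
    (Fintype.card (CoverIndex α τ i k) : ℝ) ≤
      (admissibleDenoms α (fun l => τ (Fin.natAdd d l)) k).card * ((3 * p * p) ^ d *
        ((p : ℝ) ^ k) ^ ((d : ℝ) +
          ∑ j : Fin d, max (τ (Fin.castAdd m i) - τ (Fin.castAdd m j)) 0)) := by
  have hp1 : (1 : ℝ) < p := by exact_mod_cast (Fact.out : p.Prime).one_lt
  have hp0 : (0 : ℝ) < p := by linarith
  have hX0 : (0 : ℝ) < (p : ℝ) ^ k := by positivity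
  have hnum : (((p ^ (k + 1) : ℕ) : ℤ) + 1 - -((p ^ (k + 1) : ℕ) : ℤ)).toNat =
      2 * p ^ (k + 1) + 1 := by omega
  simp only [CoverIndex, Fintype.card_prod, Fintype.card_pi, Fintype.card_coe, Int.card_Icc,
    Fintype.card_fin, hnum]
  push_cast
  gcongr
  have hprod : ∏ j : Fin d, (3 * p * p * ((p : ℝ) ^ k) ^
      (1 + max (τ (Fin.castAdd m i) - τ (Fin.castAdd m j)) 0)) = (3 * p * p) ^ d *
        ((p : ℝ) ^ k) ^ ((d : ℝ) +
          ∑ j : Fin d, max (τ (Fin.castAdd m i) - τ (Fin.castAdd m j)) 0) := by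
    rw [Finset.prod_mul_distrib, Finset.prod_const, ← Real.rpow_sum_of_pos hX0,
      Finset.sum_add_distrib]
    simp
  rw [← hprod]
  refine Finset.prod_le_prod (fun j _ => by positivity) fun j _ => ?_
  rw [Real.rpow_add hX0, Real.rpow_one]
  have h1 : (2 : ℝ) * p ^ (k + 1) + 1 ≤ 3 * p * p ^ k := by
    have : (1 : ℝ) ≤ p ^ (k + 1) := one_le_pow₀ hp1.le
    rw [pow_succ] at this ⊢
    linarith
  have h2 := pow_floor_sub_floor_le hp1 k (τ (Fin.castAdd m i)) (τ (Fin.castAdd m j)) (hτ _).le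
  calc _ ≤ (3 * p * (p : ℝ) ^ k) *
        (p * ((p : ℝ) ^ k) ^ (max (τ (Fin.castAdd m i) - τ (Fin.castAdd m j)) 0)) := by gcongr
    _ = _ := by ring

theorem Wset_inter_Pialpha_subset_cover {p : ℕ} [Fact p.Prime] {d m : ℕ} (hm : 1 ≤ m)
    (α : Fin m → ℤ_[p]) (τ : Fin (d + m) → ℝ) (hτ : ∀ l, 0 < τ l) (i : Fin d) (K : ℕ) :
    Wset τ ∩ Pialpha α ⊆ ⋃ (k : ℕ) (_ : K ≤ k) (c : CoverIndex α τ i k), coverSet α τ i k c := by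
  have hpp : p.Prime := Fact.out
  have hp1 : (1 : ℝ) < p := by exact_mod_cast hpp.one_lt
  have hp0 : (0 : ℝ) < p := by linarith
  rintro x ⟨hx, hxα⟩
  simp only [Wset, Aset, Set.mem_iInter, Set.mem_iUnion, Set.mem_ofPred_eq] at hx
  obtain ⟨q₀, hq₀, q, hq, happ⟩ := hx (p ^ K)
  have hpos : 0 < q₀ := (pow_pos hpp.pos K).trans_le hq₀
  set k := Nat.log p q₀ with hk
  have hk1 : p ^ k ≤ q₀ := Nat.pow_log_le_self p hpos.ne'
  have hk2 : q₀ < p ^ (k + 1) := Nat.lt_pow_succ_log_self hpp.one_lt q₀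
  have hKk : K ≤ k := Nat.le_log_of_pow_le hpp.one_lt hq₀
  have hq₀1 : (1 : ℝ) ≤ q₀ := by exact_mod_cast hpos
  have hmult : ∀ l, ¬ p ∣ q₀ ∧ ‖(q₀ : ℤ_[p]) * x l - (q l : ℤ_[p])‖ < (q₀ : ℝ) ^ (-(τ l)) :=
    fun l => norm_mul_sub_lt_of_approx hpos.ne' (hq l).2
      (Real.rpow_le_one_of_one_le_of_nonpos hq₀1 (by linarith [hτ l])) (happ l)
  have hadm : q₀ ∈ admissibleDenoms α (fun l => τ (Fin.natAdd d l)) k := by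
    refine Finset.mem_filter.2 ⟨Finset.mem_range.2 hk2, hk1, (hmult (Fin.natAdd d ⟨0, hm⟩)).1,
      fun l => q (Fin.natAdd d l), fun l => ⟨(hq _).1, ?_⟩⟩
    have := (hmult (Fin.natAdd d l)).2
    rwa [hxα l] at this
  have hball : ∀ l, ‖(q₀ : ℤ_[p]) * x l - (q l : ℤ_[p])‖ ≤ (p : ℝ) ^ (-(⌊k * τ l⌋₊ : ℤ)) := by
    intro l
    refine (hmult l).2.le.trans ?_
    have hX0 : (0 : ℝ) < (p : ℝ) ^ k := by positivity
    refine (Real.rpow_le_rpow_of_nonpos hX0 (by exact_mod_cast hk1)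
      (by linarith [hτ l])).trans ?_
    rw [← Real.rpow_natCast (p : ℝ) k, ← Real.rpow_mul hp0.le, ← Real.rpow_intCast]
    refine Real.rpow_le_rpow_of_exponent_le hp1.le ?_
    have := Nat.floor_le (a := (k : ℝ) * τ l) (mul_nonneg (by positivity) (hτ l).le)
    push_cast
    linarith
  choose z hz using fun j : Fin d => exists_residue _ ⌊k * τ (Fin.castAdd m j)⌋₊
    ⌊k * τ (Fin.castAdd m i)⌋₊ (hball (Fin.castAdd m j))
  have hqmem : ∀ l, q l ∈ Finset.Icc (-((p ^ (k + 1) : ℕ) : ℤ)) (p ^ (k + 1) : ℕ) := by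
    intro l
    have h1 := abs_le.1 (hq l).1
    have h2 : (q₀ : ℤ) < (p ^ (k + 1) : ℕ) := by exact_mod_cast hk2
    rw [Finset.mem_Icc]
    constructor <;> linarith
  simp only [Set.mem_iUnion]
  exact ⟨k, hKk, ⟨⟨q₀, hadm⟩, fun j => ⟨⟨q (Fin.castAdd m j), hqmem _⟩, z j⟩⟩, hxα, hz⟩

/-! ### The dimension bound -/

/-- Upper bound of Theorem 2 for the Hausdorff dimension of `𝔚_n(τ) ∩ Π_α`. -/
theorem dimH_Wset_inter_hyperplane_upper {p : ℕ} [Fact p.Prime] {d m : ℕ}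
    (hd : 1 ≤ d) (hm : 1 ≤ m) (α : Fin m → ℤ_[p])
    (hα : dioExp α = (m : ℝ) + 1) (τ : Fin (d + m) → ℝ)
    (hτpos : ∀ i, 0 < τ i)
    (h₁ : ∑ i : Fin m, τ (Fin.natAdd d i) < (m : ℝ) + 1)
    (h₂ : ((d : ℝ) + m) + 1 < ∑ i, τ i)
    (h₃ : ∀ i, 1 < τ i) (s : ℝ)
    (hs : s = ⨅ i : Fin d,
      (((d : ℝ) + m + 1 - ∑ i' : Fin m, τ (Fin.natAdd d i') +
        ∑ j ∈ Finset.univ.filter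
          (fun j : Fin d => τ (Fin.castAdd m j) ≤ τ (Fin.castAdd m i)),
          (τ (Fin.castAdd m i) - τ (Fin.castAdd m j))) / τ (Fin.castAdd m i))) :
    dimH (Wset τ ∩ Pialpha α) ≤ ENNReal.ofReal s := by
  have : Nonempty (Fin d) := ⟨⟨0, hd⟩⟩
  obtain ⟨i, hi⟩ := exists_eq_ciInf_of_finite (f := fun i : Fin d =>
      (((d : ℝ) + m + 1 - ∑ i' : Fin m, τ (Fin.natAdd d i') +
        ∑ j ∈ Finset.univ.filter
          (fun j : Fin d => τ (Fin.castAdd m j) ≤ τ (Fin.castAdd m i)),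
          (τ (Fin.castAdd m i) - τ (Fin.castAdd m j))) / τ (Fin.castAdd m i)))
  rw [← hi] at hs
  have hp1 : (1 : ℝ) < p := by exact_mod_cast (Fact.out : p.Prime).one_lt
  have hw : 0 < τ (Fin.castAdd m i) := hτpos _
  have hmax : ∑ j ∈ Finset.univ.filter
      (fun j : Fin d => τ (Fin.castAdd m j) ≤ τ (Fin.castAdd m i)),
      (τ (Fin.castAdd m i) - τ (Fin.castAdd m j)) =
      ∑ j : Fin d, max (τ (Fin.castAdd m i) - τ (Fin.castAdd m j)) 0 := by
    rw [Finset.sum_filter]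
    refine Finset.sum_congr rfl fun j _ => ?_
    split_ifs with h
    · rw [max_eq_left (by linarith)]
    · rw [max_eq_right (by linarith)]
  rw [hmax] at hs
  set σ := ∑ l : Fin m, τ (Fin.natAdd d l) with hσ
  set S := ∑ j : Fin d, max (τ (Fin.castAdd m i) - τ (Fin.castAdd m j)) 0 with hS
  have hS0 : 0 ≤ S := Finset.sum_nonneg fun _ _ => le_max_right _ _
  have hσ0 : 0 < σ := Finset.sum_pos (fun _ _ => hτpos _) ⟨⟨0, hm⟩, Finset.mem_univ _⟩
  have hm0 : (0 : ℝ) < (m : ℝ) + 1 := by positivity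
  have hs0 : 0 ≤ s := by
    rw [hs]
    exact div_nonneg (by have : (0 : ℝ) ≤ d := by positivity
                         linarith) hw.le
  have hsw : s * τ (Fin.castAdd m i) = (d : ℝ) + m + 1 - σ + S := by
    rw [hs, div_mul_cancel₀ _ hw.ne']
  refine le_of_forall_gt_imp_ge_of_dense fun a ha => ?_
  rcases eq_or_ne a ⊤ with rfl | hatop
  · exact le_top
  rw [← ENNReal.ofReal_toReal hatop] at ha ⊢
  set t := a.toReal
  have hst : s < t := (ENNReal.ofReal_lt_ofReal_iff'.1 ha).1
  -- `u` slightly below `σ / (m + 1)`: the loss `δ` in the count must stay below `(t - s) τ_i`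
  set δ := min ((t - s) * τ (Fin.castAdd m i) / 2) (σ / 2) with hδ
  have hgap : 0 < (t - s) * τ (Fin.castAdd m i) := mul_pos (by linarith) hw
  have hδ0 : 0 < δ := lt_min (by linarith) (by linarith)
  have hδ1 : δ ≤ (t - s) * τ (Fin.castAdd m i) / 2 := min_le_left _ _
  have hδ2 : δ ≤ σ / 2 := min_le_right _ _
  set u := (σ - δ) / ((m : ℝ) + 1) with hu
  have hum : u * ((m : ℝ) + 1) = σ - δ := div_mul_cancel₀ _ hm0.ne'
  have hu0 : 0 < u := div_pos (by linarith) hm0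
  have hu1 : u ≤ 1 := (div_le_one hm0).2 (by linarith)
  have hcount := eventually_card_admissibleDenoms_le α hα (fun l => τ (Fin.natAdd d l))
    (fun _ => hτpos _) hu0 hu1 (by rw [hum]; linarith)
  refine dimH_le_of_geometric_cover (b := p) (C := (4 * p + 3) ^ (m + 1) * (3 * p * p) ^ d)
    (N := (1 - u) * ((m : ℝ) + 1) + (d + S)) (coverSet α τ i) _ (hs0.trans hst.le) hp1
    (by linarith) hw ?_ ?_ (ediam_coverSet_le α τ i)
    (Wset_inter_Pialpha_subset_cover hm α τ hτpos i)
  · nlinarith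
  · filter_upwards [hcount] with k hk
    refine (card_coverIndex_le α τ hτpos i k).trans ?_
    rw [Real.rpow_add (by positivity) ((1 - u) * ((m : ℝ) + 1))]
    calc _ ≤ ((4 * p + 3) ^ (m + 1) * ((p : ℝ) ^ k) ^ ((1 - u) * ((m : ℝ) + 1))) *
          ((3 * p * p) ^ d * ((p : ℝ) ^ k) ^ ((d : ℝ) + S)) := by gcongr
      _ = _ := by ring
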